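/- arXiv:0711.0071 — 6 statements merged into one kernel-verified Lean document; each statement's English description precedes it below -/
import Mathlib

section
/- Let μ• = (μ_w)_{w∈W} ∈ 𝒱, let w, w' ∈ W and i ∈ I. If w({1,…,i}) = w'({1,…,i}) (equivalently, the functionals w·Λ_i and w'·Λ_i coincide on ℝ^N), then (w·Λ_i)(μ_w) = (w'·Λ_i)(μ_{w'}). In other words, the number M_{w·Λ_i} := (w·Λ_i)(μ_w) depends only on the functional w·Λ_i and not on the chosen expression. -/
/-!
Applied to `x`, the functional `w·Λ_i` is the fundamental weight `Λ_i` applied to `w⁻¹·x`. Since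
`Λ_i(h_j) = δ_{ij}`, it is nonnegative on the coroot cone, so `w·Λ_i` is monotone for `≥_w`. If
`w·Λ_i = w'·Λ_i`, this one functional is monotone for both `≥_w` and `≥_{w'}`, and
`μ_{w'} ≥_w μ_w`, `μ_w ≥_{w'} μ_{w'}` give the two opposite inequalities.
-/

namespace MV

/-- The action of a permutation `w` on `ℝ^N`: `(w·x)_k = x_{w⁻¹(k)}`. -/
def act (ℓ : ℕ) (w : Equiv.Perm (Fin (ℓ+1))) (x : Fin (ℓ+1) → ℝ) : Fin (ℓ+1) → ℝ :=
  fun k => x (w⁻¹ k)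

/-- The subspace `V = {x ∈ ℝ^N : Σ x_k = 0}`. -/
def Vsub (ℓ : ℕ) : Set (Fin (ℓ+1) → ℝ) := {x | ∑ k, x k = 0}

/-- The simple coroot `h_i = e_i - e_{i+1}` (here `i : Fin ℓ` encodes the 1-based index `i+1`). -/
def coroot (ℓ : ℕ) (i : Fin ℓ) : Fin (ℓ+1) → ℝ :=
  fun k => (if (k : ℕ) = (i : ℕ) then 1 else 0) - (if (k : ℕ) = (i : ℕ) + 1 then 1 else 0)

/-- The cone `Σ_{j∈I} ℝ_{≥0} h_j`. -/
def corootCone (ℓ : ℕ) : Set (Fin (ℓ+1) → ℝ) :=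
  {x | ∃ c : Fin ℓ → ℝ, (∀ j, 0 ≤ c j) ∧ x = ∑ j, c j • coroot ℓ j}

/-- The partial order `h ≥_w h'`. -/
def geOrd (ℓ : ℕ) (w : Equiv.Perm (Fin (ℓ+1))) (h h' : Fin (ℓ+1) → ℝ) : Prop :=
  act ℓ w⁻¹ (h - h') ∈ corootCone ℓ

/-- The simple reflection `s_i`, the transposition of (1-based) `i` and `i+1`. -/
def simpleRefl (ℓ : ℕ) (i : Fin ℓ) : Equiv.Perm (Fin (ℓ+1)) :=
  Equiv.swap i.castSucc i.succ

/-- The longest element `w₀ : k ↦ N+1-k`. -/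
def w0 (ℓ : ℕ) : Equiv.Perm (Fin (ℓ+1)) := Fin.revPerm

/-- The chamber weight functional `w·Λ_i : x ↦ x_{w(1)} + ⋯ + x_{w(i)}`. -/
def chamberWt (ℓ : ℕ) (w : Equiv.Perm (Fin (ℓ+1))) (i : Fin ℓ) (x : Fin (ℓ+1) → ℝ) : ℝ :=
  ∑ k ∈ Finset.univ.filter (fun k : Fin (ℓ+1) => (k : ℕ) ≤ (i : ℕ)), x (w k)

/-- The set `𝒱` of GGMS data. -/
def calV (ℓ : ℕ) : Set (Equiv.Perm (Fin (ℓ+1)) → Fin (ℓ+1) → ℝ) :=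
  {μ | (∀ w, μ w ∈ Vsub ℓ) ∧ (∀ w w', geOrd ℓ w (μ w') (μ w)) ∧ μ (w0 ℓ) = 0}

/-- The Cartan matrix of type `A_ℓ`. -/
def cartan (ℓ : ℕ) (i j : Fin ℓ) : ℝ :=
  if i = j then 2 else if (i : ℕ) + 1 = (j : ℕ) ∨ (j : ℕ) + 1 = (i : ℕ) then -1 else 0

/-- The linear involution `J : (Jx)_k = -x_{N+1-k}`. -/
def Jmap (ℓ : ℕ) (x : Fin (ℓ+1) → ℝ) : Fin (ℓ+1) → ℝ := fun k => - x k.rev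

/-- Nat-indexed (0-based) simple coroot, used for the folded coroots. -/
def corootN (ℓ : ℕ) (j : ℕ) : Fin (ℓ+1) → ℝ :=
  fun k => (if (k : ℕ) = j then 1 else 0) - (if (k : ℕ) = j + 1 then 1 else 0)

/-- The folded simple coroot `h_j^ω` (here `j : Fin n` encodes the 1-based index `j+1`):
`h_j^ω = h_j + h_{ℓ+1-j}` for `1 ≤ j ≤ n-1`, `h_n^ω = h_n` if `ℓ = 2n-1`, and
`h_n^ω = 2(h_n + h_{n+1})` if `ℓ = 2n`. -/
def fcoroot (ℓ n : ℕ) (j : Fin n) : Fin (ℓ+1) → ℝ :=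
  if (j : ℕ) + 1 < n then corootN ℓ j + corootN ℓ (ℓ - 1 - j)
  else if ℓ = 2 * n - 1 then corootN ℓ j
  else (2 : ℝ) • (corootN ℓ j + corootN ℓ ((j : ℕ) + 1))

/-- The folded coroot cone `Σ_{j=1}^{n} ℝ_{≥0} h_j^ω`. -/
def fcone (ℓ n : ℕ) : Set (Fin (ℓ+1) → ℝ) :=
  {x | ∃ c : Fin n → ℝ, (∀ j, 0 ≤ c j) ∧ x = ∑ j, c j • fcoroot ℓ n j}


/-- The simple transposition `s_{a+1}` (0-based `a`) in the symmetric group of `{1,…,m+1}`. -/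
def swN (m a : ℕ) : Equiv.Perm (Fin (m+1)) :=
  if h : a + 1 ≤ m then Equiv.swap ⟨a, by omega⟩ ⟨a + 1, by omega⟩ else 1

end MV

open MV

namespace MV

variable {ℓ : ℕ}

/-- The fundamental weight `Λ_i : x ↦ x_1 + ⋯ + x_i` as a linear functional, of which `chamberWt`
is the `w`-translate. As in `chamberWt`, `i : Fin ℓ` encodes the 1-based index `i + 1`. -/
def fundamentalWeight (i : Fin ℓ) : (Fin (ℓ + 1) → ℝ) →ₗ[ℝ] ℝ :=
  ∑ k ∈ Finset.univ.filter (fun k : Fin (ℓ + 1) => (k : ℕ) ≤ (i : ℕ)), LinearMap.proj k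

lemma fundamentalWeight_apply (i : Fin ℓ) (x : Fin (ℓ + 1) → ℝ) :
    fundamentalWeight i x
      = ∑ k ∈ Finset.univ.filter (fun k : Fin (ℓ + 1) => (k : ℕ) ≤ (i : ℕ)), x k := by
  simp [fundamentalWeight]

lemma fundamentalWeight_single (i : Fin ℓ) (k : Fin (ℓ + 1)) (a : ℝ) :
    fundamentalWeight i (Pi.single k a) = if (k : ℕ) ≤ i then a else 0 := by
  simp [fundamentalWeight_apply]

lemma coroot_eq_single_sub_single (j : Fin ℓ) :
    coroot ℓ j = Pi.single j.castSucc 1 - Pi.single j.succ 1 := by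
  ext k
  simp [coroot, Pi.single_apply, Fin.ext_iff]

lemma fundamentalWeight_coroot (i j : Fin ℓ) :
    fundamentalWeight i (coroot ℓ j) = if j = i then 1 else 0 := by
  rw [coroot_eq_single_sub_single, map_sub, fundamentalWeight_single, fundamentalWeight_single]
  grind

lemma fundamentalWeight_nonneg (i : Fin ℓ) {x : Fin (ℓ + 1) → ℝ} (hx : x ∈ corootCone ℓ) :
    0 ≤ fundamentalWeight i x := by
  obtain ⟨c, hc, rfl⟩ := hx
  have coeff : fundamentalWeight i (∑ j, c j • coroot ℓ j) = c i := by
    simp [fundamentalWeight_coroot]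
  exact coeff ▸ hc i

lemma chamberWt_eq_fundamentalWeight_act (w : Equiv.Perm (Fin (ℓ + 1))) (i : Fin ℓ)
    (x : Fin (ℓ + 1) → ℝ) :
    chamberWt ℓ w i x = fundamentalWeight i (act ℓ w⁻¹ x) := by
  simp [chamberWt, fundamentalWeight_apply, act]

lemma chamberWt_sub (w : Equiv.Perm (Fin (ℓ + 1))) (i : Fin ℓ) (x y : Fin (ℓ + 1) → ℝ) :
    chamberWt ℓ w i (x - y) = chamberWt ℓ w i x - chamberWt ℓ w i y :=
  Finset.sum_sub_distrib _ _

lemma chamberWt_le_of_geOrd {w : Equiv.Perm (Fin (ℓ + 1))} (i : Fin ℓ)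
    {x y : Fin (ℓ + 1) → ℝ} (h : geOrd ℓ w x y) :
    chamberWt ℓ w i y ≤ chamberWt ℓ w i x := by
  rw [← sub_nonneg, ← chamberWt_sub, chamberWt_eq_fundamentalWeight_act]
  exact fundamentalWeight_nonneg i h

lemma chamberWt_eq_sum_image (w : Equiv.Perm (Fin (ℓ + 1))) (i : Fin ℓ)
    (x : Fin (ℓ + 1) → ℝ) :
    chamberWt ℓ w i x
      = ∑ k ∈ (Finset.univ.filter (fun k : Fin (ℓ + 1) => (k : ℕ) ≤ (i : ℕ))).image ⇑w, x k :=
  (Finset.sum_image w.injective.injOn).symm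

lemma chamberWt_congr {w w' : Equiv.Perm (Fin (ℓ + 1))} {i : Fin ℓ}
    (h : (Finset.univ.filter (fun k : Fin (ℓ + 1) => (k : ℕ) ≤ (i : ℕ))).image ⇑w
      = (Finset.univ.filter (fun k : Fin (ℓ + 1) => (k : ℕ) ≤ (i : ℕ))).image ⇑w') :
    chamberWt ℓ w i = chamberWt ℓ w' i := by
  ext x
  rw [chamberWt_eq_sum_image, chamberWt_eq_sum_image, h]

end MV

theorem stmt1_general {ℓ : ℕ} {w w' : Equiv.Perm (Fin (ℓ + 1))} {i : Fin ℓ}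
    {x x' : Fin (ℓ + 1) → ℝ} (hx'x : geOrd ℓ w x' x) (hxx' : geOrd ℓ w' x x')
    (hww' : (Finset.univ.filter (fun k : Fin (ℓ + 1) => (k : ℕ) ≤ (i : ℕ))).image ⇑w
      = (Finset.univ.filter (fun k : Fin (ℓ + 1) => (k : ℕ) ≤ (i : ℕ))).image ⇑w') :
    chamberWt ℓ w i x = chamberWt ℓ w' i x' := by
  have same_weight : chamberWt ℓ w i = chamberWt ℓ w' i := chamberWt_congr hww'
  apply le_antisymm
  · calc chamberWt ℓ w i x ≤ chamberWt ℓ w i x' := chamberWt_le_of_geOrd i hx'x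
      _ = chamberWt ℓ w' i x' := congrFun same_weight x'
  · calc chamberWt ℓ w' i x' ≤ chamberWt ℓ w' i x := chamberWt_le_of_geOrd i hxx'
      _ = chamberWt ℓ w i x := (congrFun same_weight x).symm

/-- the number `M_{w·Λ_i} = (w·Λ_i)(μ_w)` depends only on the chamber weight
`w·Λ_i`, i.e. only on the set `w({1,…,i})`. -/
theorem stmt1 (ℓ : ℕ) (hℓ : 3 ≤ ℓ)
    (μ : Equiv.Perm (Fin (ℓ+1)) → Fin (ℓ+1) → ℝ) (hμ : μ ∈ calV ℓ)
    (w w' : Equiv.Perm (Fin (ℓ+1))) (i : Fin ℓ)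
    (hww' : (Finset.univ.filter (fun k : Fin (ℓ+1) => (k : ℕ) ≤ (i : ℕ))).image ⇑w
          = (Finset.univ.filter (fun k : Fin (ℓ+1) => (k : ℕ) ≤ (i : ℕ))).image ⇑w') :
    chamberWt ℓ w i (μ w) = chamberWt ℓ w' i (μ w') :=
  stmt1_general (hμ.2.1 w w') (hμ.2.1 w' w) hww'
end

section
/- (Length formula.) Let μ• = (μ_w)_{w∈W} ∈ 𝒱, w ∈ W, i ∈ I. Then μ_{w s_i} − μ_w = L · (w·h_i), where L = −M_{w·Λ_i} − M_{w s_i·Λ_i} − Σ_{j∈I, j≠i} a_{ji} M_{w·Λ_j}; moreover L ≥ 0. -/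
open MV

namespace MV

lemma eq_zero_of_sum_Iic_eq_zero {α M : Type*} [PartialOrder α] [LocallyFiniteOrderBot α]
    [AddCommMonoid M] {f : α → M} (h : ∀ a, ∑ b ∈ Finset.Iic a, f b = 0) : f = 0 := by
  have : WellFoundedLT α :=
    (Finset.card_strictMono.comp fun _ _ => Finset.Iic_ssubset_Iic.mpr).wellFoundedLT
  funext a
  induction a using WellFoundedLT.induction with
  | ind a ih =>
    have hIio : ∑ b ∈ Finset.Iio a, f b = 0 :=
      Finset.sum_eq_zero fun b hb => ih b (Finset.mem_Iio.mp hb)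
    simpa only [Finset.Iic_eq_cons_Iio, Finset.sum_cons, hIio, add_zero, Pi.zero_apply] using h a

variable {ℓ : ℕ}

lemma coroot_apply (i : Fin ℓ) (k : Fin (ℓ + 1)) :
    coroot ℓ i k = (if k = i.castSucc then 1 else 0) - (if k = i.succ then 1 else 0) := by
  simp [coroot, Fin.ext_iff]

lemma sub_mem_Vsub {x y : Fin (ℓ + 1) → ℝ} (hx : x ∈ Vsub ℓ) (hy : y ∈ Vsub ℓ) :
    x - y ∈ Vsub ℓ := by
  simp only [Vsub, Set.mem_ofPred_eq] at hx hy ⊢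
  simp [hx, hy]

lemma sum_smul_act_coroot_mem_Vsub (w : Equiv.Perm (Fin (ℓ + 1))) (c : Fin ℓ → ℝ) :
    ∑ j, c j • act ℓ w (coroot ℓ j) ∈ Vsub ℓ := by
  have hcoroot (j : Fin ℓ) : ∑ k, act ℓ w (coroot ℓ j) k = 0 :=
    (Equiv.sum_comp w⁻¹ (coroot ℓ j)).trans (by simp [coroot_apply])
  simp only [Vsub, Set.mem_ofPred_eq, Finset.sum_apply, Pi.smul_apply, smul_eq_mul]
  rw [Finset.sum_comm]
  simp [← Finset.mul_sum, hcoroot]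

lemma chamberWt_eq_sum_Iic (w : Equiv.Perm (Fin (ℓ + 1))) (i : Fin ℓ) (x : Fin (ℓ + 1) → ℝ) :
    chamberWt ℓ w i x = ∑ k ∈ Finset.Iic i.castSucc, x (w k) :=
  Finset.sum_congr (by ext; simp [Fin.le_def]) fun _ _ => rfl

lemma isLinearMap_chamberWt (w : Equiv.Perm (Fin (ℓ + 1))) (i : Fin ℓ) :
    IsLinearMap ℝ (chamberWt ℓ w i) where
  map_add x y := by simp [chamberWt, Finset.sum_add_distrib]
  map_smul c x := by simp [chamberWt, Finset.mul_sum]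

lemma chamberWt_act_coroot (w : Equiv.Perm (Fin (ℓ + 1))) (i j : Fin ℓ) :
    chamberWt ℓ w i (act ℓ w (coroot ℓ j)) = if i = j then 1 else 0 := by
  simp only [chamberWt_eq_sum_Iic, act, Equiv.Perm.coe_inv, Equiv.symm_apply_apply,
    coroot_apply, Finset.sum_sub_distrib, Finset.sum_ite_eq', Finset.mem_Iic]
  simp only [Fin.le_def, Fin.val_castSucc, Fin.val_succ, Fin.ext_iff]
  split_ifs <;> first | omega | norm_num

lemma chamberWt_sum_smul_act_coroot (w : Equiv.Perm (Fin (ℓ + 1))) (i : Fin ℓ) (c : Fin ℓ → ℝ) :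
    chamberWt ℓ w i (∑ j, c j • act ℓ w (coroot ℓ j)) = c i := by
  calc chamberWt ℓ w i (∑ j, c j • act ℓ w (coroot ℓ j))
      = ∑ j, chamberWt ℓ w i (c j • act ℓ w (coroot ℓ j)) :=
        map_sum (IsLinearMap.mk' _ (isLinearMap_chamberWt w i)) _ _
    _ = c i := by simp [(isLinearMap_chamberWt w i).map_smul, chamberWt_act_coroot]

lemma eq_zero_of_chamberWt_eq_zero {w : Equiv.Perm (Fin (ℓ + 1))} {x : Fin (ℓ + 1) → ℝ}
    (hx : x ∈ Vsub ℓ) (h : ∀ j, chamberWt ℓ w j x = 0) : x = 0 := by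
  have hxw : (fun k => x (w k)) = 0 := by
    refine eq_zero_of_sum_Iic_eq_zero fun k => ?_
    induction k using Fin.lastCases with
    | last => exact (Finset.Iic_top (α := Fin (ℓ + 1))) ▸ (Equiv.sum_comp w x).trans hx
    | cast j => exact (chamberWt_eq_sum_Iic w j x).symm.trans (h j)
  funext k
  simpa using congrFun hxw (w⁻¹ k)

lemma eq_sum_chamberWt_smul_act_coroot (w : Equiv.Perm (Fin (ℓ + 1))) {x : Fin (ℓ + 1) → ℝ}
    (hx : x ∈ Vsub ℓ) : x = ∑ j, chamberWt ℓ w j x • act ℓ w (coroot ℓ j) := by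
  refine sub_eq_zero.mp (eq_zero_of_chamberWt_eq_zero (w := w) (sub_mem_Vsub hx
    (sum_smul_act_coroot_mem_Vsub w _)) fun j => ?_)
  rw [(isLinearMap_chamberWt w j).map_sub, chamberWt_sum_smul_act_coroot, sub_self]

/-- The simple root `α_i : x ↦ x_i - x_{i+1}` (here `i : Fin ℓ` encodes the 1-based index `i+1`),
extended from `V` to `ℝ^N`. -/
def simpleRoot (ℓ : ℕ) (i : Fin ℓ) (x : Fin (ℓ + 1) → ℝ) : ℝ :=
  x i.castSucc - x i.succ

lemma simpleRoot_coroot (i j : Fin ℓ) : simpleRoot ℓ i (coroot ℓ j) = cartan ℓ j i := by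
  simp only [simpleRoot, coroot, cartan, Fin.val_castSucc, Fin.val_succ, Fin.ext_iff]
  split_ifs <;> first | omega | norm_num

lemma simpleRoot_act_inv_eq_sum_cartan (w : Equiv.Perm (Fin (ℓ + 1))) (i : Fin ℓ)
    {x : Fin (ℓ + 1) → ℝ} (hx : x ∈ Vsub ℓ) :
    simpleRoot ℓ i (act ℓ w⁻¹ x) = ∑ j, cartan ℓ j i * chamberWt ℓ w j x := by
  conv_lhs => rw [eq_sum_chamberWt_smul_act_coroot w hx]
  simp [simpleRoot, act, ← simpleRoot_coroot, mul_sub, mul_comm]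

lemma act_simpleRefl (i : Fin ℓ) (x : Fin (ℓ + 1) → ℝ) :
    act ℓ (simpleRefl ℓ i) x = x - simpleRoot ℓ i x • coroot ℓ i := by
  funext k
  simp only [act, simpleRefl, Equiv.swap_inv, Equiv.swap_apply_def, simpleRoot, Pi.sub_apply,
    Pi.smul_apply, smul_eq_mul, coroot_apply]
  have hne : i.castSucc ≠ i.succ := Fin.castSucc_lt_succ.ne
  split_ifs with h₁ h₂ h₂
  · exact absurd (h₁.symm.trans h₂) hne
  · rw [h₁]; ring
  · rw [h₂]; ring
  · ring

lemma chamberWt_mul_simpleRefl (w : Equiv.Perm (Fin (ℓ + 1))) (i j : Fin ℓ)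
    (x : Fin (ℓ + 1) → ℝ) :
    chamberWt ℓ (w * simpleRefl ℓ i) j x
      = chamberWt ℓ w j x - if j = i then simpleRoot ℓ i (act ℓ w⁻¹ x) else 0 := by
  calc chamberWt ℓ (w * simpleRefl ℓ i) j x
      = chamberWt ℓ 1 j (act ℓ (simpleRefl ℓ i) (act ℓ w⁻¹ x)) := by
        simp [chamberWt, act, simpleRefl]
    _ = chamberWt ℓ 1 j (act ℓ w⁻¹ x)
          - simpleRoot ℓ i (act ℓ w⁻¹ x) * chamberWt ℓ 1 j (act ℓ 1 (coroot ℓ i)) := by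
        rw [act_simpleRefl, (isLinearMap_chamberWt 1 j).map_sub,
          (isLinearMap_chamberWt 1 j).map_smul]
        rfl
    _ = chamberWt ℓ w j x - if j = i then simpleRoot ℓ i (act ℓ w⁻¹ x) else 0 := by
        rw [chamberWt_act_coroot, mul_ite, mul_one, mul_zero]
        rfl

lemma chamberWt_mul_simpleRefl_of_ne (w : Equiv.Perm (Fin (ℓ + 1))) {i j : Fin ℓ} (hj : j ≠ i)
    (x : Fin (ℓ + 1) → ℝ) : chamberWt ℓ (w * simpleRefl ℓ i) j x = chamberWt ℓ w j x := by
  rw [chamberWt_mul_simpleRefl, if_neg hj, sub_zero]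

lemma chamberWt_add_chamberWt_mul_simpleRefl (w : Equiv.Perm (Fin (ℓ + 1))) (i : Fin ℓ)
    {x : Fin (ℓ + 1) → ℝ} (hx : x ∈ Vsub ℓ) :
    chamberWt ℓ w i x + chamberWt ℓ (w * simpleRefl ℓ i) i x
      = -∑ j ∈ Finset.univ.erase i, cartan ℓ j i * chamberWt ℓ w j x := by
  have hdiag : cartan ℓ i i = 2 := if_pos rfl
  rw [chamberWt_mul_simpleRefl, if_pos rfl, simpleRoot_act_inv_eq_sum_cartan w i hx,
    ← Finset.add_sum_erase _ _ (Finset.mem_univ i), hdiag]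
  ring

section geOrd

variable {w : Equiv.Perm (Fin (ℓ + 1))} {x y : Fin (ℓ + 1) → ℝ}

lemma geOrd.exists_sub_eq_sum (h : geOrd ℓ w y x) :
    ∃ c : Fin ℓ → ℝ, (∀ j, 0 ≤ c j) ∧ y - x = ∑ j, c j • act ℓ w (coroot ℓ j) := by
  obtain ⟨c, hc, hsum⟩ := h
  refine ⟨c, hc, funext fun k => ?_⟩
  simpa [act] using congrFun hsum (w⁻¹ k)

lemma geOrd.sub_mem_Vsub (h : geOrd ℓ w y x) : y - x ∈ Vsub ℓ := by
  obtain ⟨c, -, hsum⟩ := h.exists_sub_eq_sum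
  exact hsum ▸ sum_smul_act_coroot_mem_Vsub w c

lemma geOrd.chamberWt_le (h : geOrd ℓ w y x) (j : Fin ℓ) :
    chamberWt ℓ w j x ≤ chamberWt ℓ w j y := by
  obtain ⟨c, hc, hsum⟩ := h.exists_sub_eq_sum
  rw [← sub_nonneg, ← (isLinearMap_chamberWt w j).map_sub, hsum, chamberWt_sum_smul_act_coroot]
  exact hc j

lemma chamberWt_eq_of_geOrd {i j : Fin ℓ} (hyx : geOrd ℓ w y x)
    (hxy : geOrd ℓ (w * simpleRefl ℓ i) x y) (hj : j ≠ i) :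
    chamberWt ℓ w j y = chamberWt ℓ w j x := by
  refine le_antisymm ?_ (hyx.chamberWt_le j)
  simpa only [chamberWt_mul_simpleRefl_of_ne w hj] using hxy.chamberWt_le j

lemma sub_eq_smul_act_coroot_of_geOrd {i : Fin ℓ} (hyx : geOrd ℓ w y x)
    (hxy : geOrd ℓ (w * simpleRefl ℓ i) x y) :
    y - x = (chamberWt ℓ w i y - chamberWt ℓ w i x) • act ℓ w (coroot ℓ i) := by
  have hexpand := eq_sum_chamberWt_smul_act_coroot w hyx.sub_mem_Vsub
  simp only [(isLinearMap_chamberWt w _).map_sub] at hexpand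
  rwa [Fintype.sum_eq_single i fun j hj => by
    rw [chamberWt_eq_of_geOrd hyx hxy hj, sub_self, zero_smul]] at hexpand

end geOrd

end MV

theorem stmt3_general {ℓ : ℕ} {w : Equiv.Perm (Fin (ℓ + 1))} {i : Fin ℓ} {x y : Fin (ℓ + 1) → ℝ}
    (hy : y ∈ Vsub ℓ) (hyx : geOrd ℓ w y x) (hxy : geOrd ℓ (w * simpleRefl ℓ i) x y) :
    ∃ L : ℝ,
      L = -(chamberWt ℓ w i x) - chamberWt ℓ (w * simpleRefl ℓ i) i y
          - ∑ j ∈ Finset.univ.erase i, cartan ℓ j i * chamberWt ℓ w j x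
      ∧ y - x = L • act ℓ w (coroot ℓ i)
      ∧ 0 ≤ L := by
  refine ⟨chamberWt ℓ w i y - chamberWt ℓ w i x, ?_, sub_eq_smul_act_coroot_of_geOrd hyx hxy,
    sub_nonneg.mpr (hyx.chamberWt_le i)⟩
  have hsum : ∑ j ∈ Finset.univ.erase i, cartan ℓ j i * chamberWt ℓ w j x
      = ∑ j ∈ Finset.univ.erase i, cartan ℓ j i * chamberWt ℓ w j y :=
    Finset.sum_congr rfl fun j hj => by
      rw [chamberWt_eq_of_geOrd hyx hxy (Finset.ne_of_mem_erase hj)]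
  linarith [chamberWt_add_chamberWt_mul_simpleRefl w i hy]

/-- length formula: `μ_{w s_i} - μ_w = L · (w·h_i)` with
`L = -M_{w·Λ_i} - M_{w s_i·Λ_i} - Σ_{j≠i} a_{ji} M_{w·Λ_j}`, and `L ≥ 0`. -/
theorem stmt3 (ℓ : ℕ) (hℓ : 3 ≤ ℓ)
    (μ : Equiv.Perm (Fin (ℓ+1)) → Fin (ℓ+1) → ℝ) (hμ : μ ∈ calV ℓ)
    (w : Equiv.Perm (Fin (ℓ+1))) (i : Fin ℓ) :
    ∃ L : ℝ,
      L = -(chamberWt ℓ w i (μ w))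
          - chamberWt ℓ (w * simpleRefl ℓ i) i (μ (w * simpleRefl ℓ i))
          - ∑ j ∈ Finset.univ.erase i, cartan ℓ j i * chamberWt ℓ w j (μ w)
      ∧ μ (w * simpleRefl ℓ i) - μ w = L • act ℓ w (coroot ℓ i)
      ∧ 0 ≤ L :=
  stmt3_general (hμ.1 _) (hμ.2.1 w _) (hμ.2.1 _ w)
end

section
/- If μ•, μ'• ∈ 𝒱 and the pseudo-Weyl polytopes P(μ•) = {h ∈ V : h ≥_w μ_w for all w ∈ W} and P(μ'•) = {h ∈ V : h ≥_w μ'_w for all w ∈ W} are equal as subsets of V, then μ_w = μ'_w for all w ∈ W. -/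
open MV

/-!
Each vertex `μ w` lies in the polytope of `μ`, hence in that of `μ'`, so `μ w ≥_w μ' w`;
symmetrically `μ' w ≥_w μ w`. It remains to see that `≥_w` is antisymmetric, i.e. that the coroot
cone contains no line, and this holds because the height functional is positive on every simple
coroot.
-/

namespace MV

section Cone

variable {R E : Type*} [Semiring R] [PartialOrder R] [IsStrictOrderedRing R]

lemma eq_zero_or_pos_of_mem_hull [AddCommMonoid E] [Module R E] {s : Set E} {φ : E →ₗ[R] R}
    (hφ : ∀ v ∈ s, 0 < φ v) {x : E} (hx : x ∈ PointedCone.hull R s) : x = 0 ∨ 0 < φ x := by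
  induction hx using Submodule.span_induction with
  | mem v hv => exact .inr (hφ v hv)
  | zero => exact .inl rfl
  | add x y _ _ hx hy =>
    rcases hx with rfl | hx
    · simpa only [zero_add] using hy
    rcases hy with rfl | hy
    · simpa only [add_zero] using Or.inr hx
    · exact .inr (by simpa only [map_add] using add_pos hx hy)
  | smul a x _ hx =>
    rcases hx with rfl | hx
    · exact .inl (smul_zero a)
    rcases a.2.eq_or_lt with ha | ha
    · left
      rw [Nonneg.mk_smul, ← ha, zero_smul]
    · right
      rw [Nonneg.mk_smul, map_smul]
      exact mul_pos ha hx

lemma salient_hull_of_forall_pos [AddCommGroup E] [Module R E] {s : Set E} {φ : E →ₗ[R] R}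
    (hφ : ∀ v ∈ s, 0 < φ v) :
    (PointedCone.hull R s).toConvexCone.Salient := by
  intro x hx hx0 hnx
  have hpos : 0 < φ x := (eq_zero_or_pos_of_mem_hull hφ hx).resolve_left hx0
  have hneg : 0 < φ (-x) := (eq_zero_or_pos_of_mem_hull hφ hnx).resolve_left (neg_ne_zero.mpr hx0)
  have hsum : φ x + φ (-x) = 0 := by rw [← map_add, add_neg_cancel, map_zero]
  exact (add_pos hpos hneg).ne' hsum

end Cone

variable {ℓ : ℕ} {w : Equiv.Perm (Fin (ℓ + 1))} {x y : Fin (ℓ + 1) → ℝ}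
  {μ μ' : Equiv.Perm (Fin (ℓ + 1)) → Fin (ℓ + 1) → ℝ}

lemma coroot_eq_single_sub_single_s6 (i : Fin ℓ) :
    coroot ℓ i = Pi.single i.castSucc 1 - Pi.single i.succ 1 := by
  ext k
  simp [coroot, Pi.single_apply, Fin.ext_iff]

lemma corootCone_eq_hull : corootCone ℓ = PointedCone.hull ℝ (Set.range (coroot ℓ)) := by
  ext x
  rw [SetLike.mem_coe, Submodule.mem_span_range_iff_exists_fun]
  constructor
  · rintro ⟨c, hc, rfl⟩
    exact ⟨fun j => ⟨c j, hc j⟩, rfl⟩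
  · rintro ⟨c, rfl⟩
    exact ⟨fun j => c j, fun j => (c j).2, rfl⟩

/-- The height functional. Restricted to `V` it is the pairing with the half-sum of the positive
roots, whose coefficients `ℓ/2 - k` are shifted here by the constant `ℓ/2`. -/
def height (ℓ : ℕ) : (Fin (ℓ + 1) → ℝ) →ₗ[ℝ] ℝ :=
  Fintype.linearCombination ℝ fun k => -(k : ℝ)

lemma height_coroot (i : Fin ℓ) : height ℓ (coroot ℓ i) = 1 := by
  simp [height, coroot_eq_single_sub_single_s6, Fintype.linearCombination_apply_single]

lemma eq_zero_of_mem_corootCone_of_neg_mem (hx : x ∈ corootCone ℓ) (hnx : -x ∈ corootCone ℓ) :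
    x = 0 := by
  have hpos : ∀ v ∈ Set.range (coroot ℓ), 0 < height ℓ v :=
    Set.forall_mem_range.mpr fun i => (height_coroot i).symm ▸ one_pos
  rw [corootCone_eq_hull] at hx hnx
  by_contra hx0
  exact salient_hull_of_forall_pos hpos x hx hx0 hnx

lemma act_neg (w : Equiv.Perm (Fin (ℓ + 1))) (x : Fin (ℓ + 1) → ℝ) : act ℓ w (-x) = -act ℓ w x :=
  rfl

lemma act_eq_zero_iff : act ℓ w x = 0 ↔ x = 0 :=
  (w⁻¹).surjective.injective_comp_right.eq_iff' rfl

lemma geOrd_antisymm (hxy : geOrd ℓ w x y) (hyx : geOrd ℓ w y x) : x = y := by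
  have hneg : -act ℓ w⁻¹ (x - y) ∈ corootCone ℓ := by
    rwa [← act_neg, neg_sub]
  exact sub_eq_zero.mp (act_eq_zero_iff.mp (eq_zero_of_mem_corootCone_of_neg_mem hxy hneg))

/-- The pseudo-Weyl polytope `P(μ•)` of an arbitrary family of points; that `μ w ∈ P(μ•)` for all
`w` expresses the mutual inequalities between the points of `μ•`. -/
def pseudoWeylPolytope (ℓ : ℕ) (μ : Equiv.Perm (Fin (ℓ + 1)) → Fin (ℓ + 1) → ℝ) :
    Set (Fin (ℓ + 1) → ℝ) :=
  {h | h ∈ Vsub ℓ ∧ ∀ w, geOrd ℓ w h (μ w)}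

lemma mem_pseudoWeylPolytope_of_mem_calV (hμ : μ ∈ calV ℓ) (w : Equiv.Perm (Fin (ℓ + 1))) :
    μ w ∈ pseudoWeylPolytope ℓ μ :=
  ⟨hμ.1 w, fun v => hμ.2.1 v w⟩

lemma geOrd_of_pseudoWeylPolytope_subset (hμ : ∀ w, μ w ∈ pseudoWeylPolytope ℓ μ)
    (hP : pseudoWeylPolytope ℓ μ ⊆ pseudoWeylPolytope ℓ μ') (w : Equiv.Perm (Fin (ℓ + 1))) :
    geOrd ℓ w (μ w) (μ' w) :=
  (hP (hμ w)).2 w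

end MV

theorem stmt6_general {ℓ : ℕ} {μ μ' : Equiv.Perm (Fin (ℓ + 1)) → Fin (ℓ + 1) → ℝ}
    (hμ : ∀ w, μ w ∈ pseudoWeylPolytope ℓ μ) (hμ' : ∀ w, μ' w ∈ pseudoWeylPolytope ℓ μ')
    (hP : pseudoWeylPolytope ℓ μ = pseudoWeylPolytope ℓ μ') (w : Equiv.Perm (Fin (ℓ + 1))) :
    μ w = μ' w :=
  geOrd_antisymm (geOrd_of_pseudoWeylPolytope_subset hμ hP.subset w)
    (geOrd_of_pseudoWeylPolytope_subset hμ' hP.superset w)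

/-- a pseudo-Weyl polytope determines its GGMS datum. -/
theorem stmt6 (ℓ : ℕ) (hℓ : 3 ≤ ℓ)
    (μ μ' : Equiv.Perm (Fin (ℓ+1)) → Fin (ℓ+1) → ℝ)
    (hμ : μ ∈ calV ℓ) (hμ' : μ' ∈ calV ℓ)
    (hP : {h | h ∈ Vsub ℓ ∧ ∀ w, geOrd ℓ w h (μ w)}
        = {h | h ∈ Vsub ℓ ∧ ∀ w, geOrd ℓ w h (μ' w)}) :
    ∀ w, μ w = μ' w :=
  stmt6_general (mem_pseudoWeylPolytope_of_mem_calV hμ) (mem_pseudoWeylPolytope_of_mem_calV hμ') hP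
end

section
/- (Folding of the coroot cone.) The set of J-fixed points of the cone Σ_{j∈I} ℝ_{≥0} h_j equals the cone Σ_{j=1}^{n} ℝ_{≥0} h_j^ω spanned by the folded simple coroots; that is, {x ∈ Σ_{j∈I} ℝ_{≥0} h_j : Jx = x} = Σ_{j=1}^{n} ℝ_{≥0} h_j^ω. -/
open MV

/-! Let `J` be an involution preserving a cone `C`. If `x ∈ C` and `J x = x`, then
`x = x / 2 + J (x / 2)`; conversely `x + J x` is fixed and lies in `C`. Hence the fixed points of
`C` form the image of `C` under `1 + J`, which is spanned by the images of the generators of `C`.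
Here `J h_i = h_{ℓ+1-i}`, so these images are the sums `h_i + h_{ℓ+1-i}`, which are, up to positive
scalars, the folded coroots. -/

namespace MV

open Submodule
open scoped NNReal

section FixedPoints

variable {R M : Type*} [Semiring R] [Invertible (2 : R)] [AddCommMonoid M] [Module R M]

lemma inf_eqLocus_id_eq_map_id_add {f : M →ₗ[R] M} (hf : Function.Involutive f)
    {p : Submodule R M} (hp : p ≤ p.comap f) :
    p ⊓ LinearMap.eqLocus f LinearMap.id = p.map (LinearMap.id + f) := by
  apply le_antisymm
  · rintro x ⟨hxp, hfx : f x = x⟩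
    refine ⟨(⅟2 : R) • x, p.smul_mem _ hxp, ?_⟩
    calc (⅟2 : R) • x + f ((⅟2 : R) • x) = (⅟2 + ⅟2 : R) • x := by rw [map_smul, hfx, add_smul]
      _ = x := by rw [invOf_two_add_invOf_two, one_smul]
  · rintro _ ⟨x, hxp, rfl⟩
    refine ⟨p.add_mem hxp (hp hxp), ?_⟩
    change f (x + f x) = x + f x
    rw [map_add, hf x, add_comm]

lemma span_range_inf_eqLocus_id {ι : Type*} {f : M →ₗ[R] M} (hf : Function.Involutive f)
    {v : ι → M} {σ : ι → ι} (hv : ∀ i, f (v i) = v (σ i)) :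
    span R (Set.range v) ⊓ LinearMap.eqLocus f LinearMap.id =
      span R (Set.range fun i => v i + v (σ i)) := by
  have hinv : span R (Set.range v) ≤ (span R (Set.range v)).comap f := by
    rw [span_le]
    rintro _ ⟨i, rfl⟩
    rw [SetLike.mem_coe, mem_comap, hv]
    exact subset_span (Set.mem_range_self (σ i))
  rw [inf_eqLocus_id_eq_map_id_add hf hinv, map_span, ← Set.range_comp]
  congr with i
  simp [hv]

end FixedPoints

lemma coe_span_nnreal_range {E ι : Type*} [AddCommMonoid E] [Module ℝ E] [Fintype ι] (v : ι → E) :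
    (span ℝ≥0 (Set.range v) : Set E) =
      {x | ∃ c : ι → ℝ, (∀ j, 0 ≤ c j) ∧ x = ∑ j, c j • v j} := by
  ext x
  rw [SetLike.mem_coe, mem_span_range_iff_exists_fun]
  constructor
  · rintro ⟨c, rfl⟩
    exact ⟨fun j => c j, fun j => (c j).coe_nonneg, rfl⟩
  · rintro ⟨c, hc, rfl⟩
    exact ⟨fun j => ⟨c j, hc j⟩, rfl⟩

/-- The involution `Jmap ℓ` as a linear map over `ℝ≥0`, the scalars for which cones are
submodules. -/
def Jlin (ℓ : ℕ) : (Fin (ℓ + 1) → ℝ) →ₗ[ℝ≥0] (Fin (ℓ + 1) → ℝ) :=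
  (-LinearMap.funLeft ℝ ℝ Fin.rev).restrictScalars ℝ≥0

lemma Jlin_apply (ℓ : ℕ) (x : Fin (ℓ + 1) → ℝ) : Jlin ℓ x = Jmap ℓ x := rfl

lemma Jlin_involutive (ℓ : ℕ) : Function.Involutive (Jlin ℓ) := by
  intro x
  funext k
  simp [Jlin_apply, Jmap]

lemma Jlin_coroot (ℓ : ℕ) (i : Fin ℓ) : Jlin ℓ (coroot ℓ i) = coroot ℓ i.rev := by
  funext k
  have hfst : ℓ - k = i ↔ (k : ℕ) = ℓ - (i + 1) + 1 := by omega
  have hsnd : ℓ - k = i + 1 ↔ (k : ℕ) = ℓ - (i + 1) := by omega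
  simp [Jlin_apply, Jmap, coroot, Fin.val_rev, hfst, hsnd]

/-- The sum `h_i + h_{ℓ+1-i}` of a simple coroot and its image under `J`; it is `2 h_i` when `J`
fixes `h_i`. -/
def orbitSum (ℓ : ℕ) (i : Fin ℓ) : Fin (ℓ + 1) → ℝ := coroot ℓ i + coroot ℓ i.rev

lemma orbitSum_rev (ℓ : ℕ) (i : Fin ℓ) : orbitSum ℓ i.rev = orbitSum ℓ i := by
  rw [orbitSum, orbitSum, Fin.rev_rev, add_comm (coroot ℓ i)]

lemma orbitSum_eq_corootN_add (ℓ : ℕ) (i : Fin ℓ) :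
    orbitSum ℓ i = corootN ℓ i + corootN ℓ (ℓ - 1 - i) := by
  rw [Nat.sub_sub, add_comm 1, ← Fin.val_rev]
  rfl

lemma exists_orbitSum_eq_smul_fcoroot {ℓ n : ℕ} (hln : ℓ = 2 * n - 1 ∨ ℓ = 2 * n) (i : Fin ℓ)
    (hi : (i : ℕ) < n) : ∃ t : ℝ≥0, t ≠ 0 ∧ orbitSum ℓ i = t • fcoroot ℓ n ⟨i, hi⟩ := by
  rw [orbitSum_eq_corootN_add]
  by_cases hlast : (i : ℕ) + 1 < n
  · exact ⟨1, one_ne_zero, by simp only [fcoroot, if_pos hlast, one_smul]⟩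
  by_cases hodd : ℓ = 2 * n - 1
  · have hfixed : ℓ - 1 - (i : ℕ) = i := by omega
    refine ⟨2, two_ne_zero, ?_⟩
    simp only [fcoroot, if_neg hlast, if_pos hodd, hfixed, two_smul]
  · have hnext : ℓ - 1 - (i : ℕ) = i + 1 := by omega
    refine ⟨2⁻¹, inv_ne_zero two_ne_zero, ?_⟩
    simp only [fcoroot, if_neg hlast, if_neg hodd, hnext, NNReal.smul_def, NNReal.coe_inv,
      NNReal.coe_ofNat, inv_smul_smul₀ (two_ne_zero' ℝ)]

lemma span_range_orbitSum {ℓ n : ℕ} (hln : ℓ = 2 * n - 1 ∨ ℓ = 2 * n) :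
    span ℝ≥0 (Set.range (orbitSum ℓ)) = span ℝ≥0 (Set.range (fcoroot ℓ n)) := by
  apply span_eq_span
  · have mem_of_lt (i : Fin ℓ) (hi : (i : ℕ) < n) :
        orbitSum ℓ i ∈ span ℝ≥0 (Set.range (fcoroot ℓ n)) := by
      obtain ⟨t, -, ht⟩ := exists_orbitSum_eq_smul_fcoroot hln i hi
      exact ht ▸ smul_mem _ t (subset_span (Set.mem_range_self _))
    rintro _ ⟨i, rfl⟩
    obtain hi | hi := lt_or_ge (i : ℕ) n
    · exact mem_of_lt i hi
    · exact orbitSum_rev ℓ i ▸ mem_of_lt i.rev (by rw [Fin.val_rev]; omega)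
  · rintro _ ⟨j, rfl⟩
    obtain ⟨t, ht₀, ht⟩ := exists_orbitSum_eq_smul_fcoroot hln ⟨j, by omega⟩ j.isLt
    rw [SetLike.mem_coe, ← smul_mem_iff _ ht₀, ← ht]
    exact subset_span (Set.mem_range_self _)

end MV

/-- folding of the coroot cone: the `J`-fixed points of the cone
`Σ_{j∈I} ℝ_{≥0} h_j` form the folded cone `Σ_{j=1}^{n} ℝ_{≥0} h_j^ω`. -/
theorem stmt13 (ℓ n : ℕ) (hn : 2 ≤ n) (hln : ℓ = 2 * n - 1 ∨ ℓ = 2 * n) :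
    {x | x ∈ corootCone ℓ ∧ Jmap ℓ x = x} = fcone ℓ n := by
  open Submodule NNReal in
  calc {x | x ∈ corootCone ℓ ∧ Jmap ℓ x = x}
    _ = ↑(span ℝ≥0 (Set.range (coroot ℓ)) ⊓ LinearMap.eqLocus (Jlin ℓ) LinearMap.id) := by
      rw [coe_inf, coe_span_nnreal_range]
      rfl
    _ = ↑(span ℝ≥0 (Set.range (orbitSum ℓ))) :=
      congrArg _ (span_range_inf_eqLocus_id (Jlin_involutive ℓ) (Jlin_coroot ℓ))
    _ = ↑(span ℝ≥0 (Set.range (fcoroot ℓ n))) := by rw [span_range_orbitSum hln]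
    _ = fcone ℓ n := coe_span_nnreal_range (fcoroot ℓ n)
end

section
/- Let μ• ∈ 𝒱^ω. Then for all w, w' ∈ W^ω, the element w⁻¹·(μ_{w'} − μ_w) lies in the folded coroot cone Σ_{j=1}^{n} ℝ_{≥0} h_j^ω. (In other words, the collection (μ_{Θ(ŵ)})_{ŵ} indexed by the Weyl group of type C_n (if ℓ = 2n−1) or B_n (if ℓ = 2n) satisfies the defining order conditions of the set 𝒱̂ for the folded root system.) -/
open MV

/-!
The involution `J` intertwines the actions of `w` and `ω(w)`, so for `w, w' ∈ W^ω` the vector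
`x = w⁻¹·(μ_{w'} - μ_w)` is fixed by `J`. It lies in the coroot cone, and `J` exchanges `h_j` and
`h_{ℓ+1-j}`; hence `2x = x + Jx` is a nonnegative combination of the vectors `h_j + h_{ℓ+1-j}`, each
of which is a positive multiple of a folded coroot.
-/

namespace MV

section Cone

variable {R E ι : Type*} [Semiring R] [PartialOrder R] [IsOrderedRing R] [AddCommMonoid E]
  [Module R E] [Fintype ι]

theorem mem_hull_range_iff_exists_nonneg {v : ι → E} {x : E} :
    x ∈ PointedCone.hull R (Set.range v) ↔ ∃ c : ι → R, (∀ i, 0 ≤ c i) ∧ x = ∑ i, c i • v i := by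
  rw [Submodule.mem_span_range_iff_exists_fun]
  constructor
  · rintro ⟨c, hx⟩
    exact ⟨fun i => c i, fun i => (c i).2, hx.symm⟩
  · rintro ⟨c, hc, hx⟩
    exact ⟨fun i => ⟨c i, hc i⟩, hx.symm⟩

end Cone

theorem fcone_eq_hull (ℓ n : ℕ) :
    fcone ℓ n = PointedCone.hull ℝ (Set.range (fcoroot ℓ n)) :=
  Set.ext fun _ => mem_hull_range_iff_exists_nonneg.symm

section Involution

variable {ℓ : ℕ}

theorem Jmap_sub (x y : Fin (ℓ + 1) → ℝ) : Jmap ℓ (x - y) = Jmap ℓ x - Jmap ℓ y :=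
  funext fun k => neg_sub' (x k.rev) (y k.rev)

theorem Jmap_sum_smul {ι : Type*} (s : Finset ι) (c : ι → ℝ) (v : ι → Fin (ℓ + 1) → ℝ) :
    Jmap ℓ (∑ i ∈ s, c i • v i) = ∑ i ∈ s, c i • Jmap ℓ (v i) := by
  ext k
  simp [Jmap]

theorem Jmap_coroot (i : Fin ℓ) : Jmap ℓ (coroot ℓ i) = coroot ℓ i.rev := by
  ext k
  have h_left : (k.rev : ℕ) = i ↔ (k : ℕ) = i.rev + 1 := by grind
  have h_right : (k.rev : ℕ) = i + 1 ↔ (k : ℕ) = i.rev := by grind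
  simp only [Jmap, coroot, h_left, h_right, neg_sub]

theorem Jmap_act (w : Equiv.Perm (Fin (ℓ + 1))) (x : Fin (ℓ + 1) → ℝ) :
    Jmap ℓ (act ℓ w x) = act ℓ (w0 ℓ * w * w0 ℓ) (Jmap ℓ x) := by
  ext k
  have h_inv : (w0 ℓ * w * w0 ℓ)⁻¹ k = (w⁻¹ k.rev).rev := rfl
  simp only [Jmap, act, h_inv, Fin.rev_rev]

theorem w0_mul_inv_mul_w0 (w : Equiv.Perm (Fin (ℓ + 1))) :
    w0 ℓ * w⁻¹ * w0 ℓ = (w0 ℓ * w * w0 ℓ)⁻¹ :=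
  rfl

end Involution

section Folding

variable {ℓ n : ℕ}

theorem exists_coroot_add_coroot_rev_eq_smul_fcoroot (hln : ℓ = 2 * n - 1 ∨ ℓ = 2 * n)
    {i : Fin ℓ} (hi : i ≤ i.rev) :
    ∃ j : Fin n, ∃ t : ℝ, 0 < t ∧ coroot ℓ i + coroot ℓ i.rev = t • fcoroot ℓ n j := by
  have hi_val : (i : ℕ) ≤ ℓ - (i + 1) := by simpa only [Fin.le_def, Fin.val_rev] using hi
  refine ⟨⟨i, by omega⟩, ?_⟩
  change ∃ t : ℝ, 0 < t ∧ corootN ℓ i + corootN ℓ i.rev = t • fcoroot ℓ n _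
  by_cases h_last : (i : ℕ) + 1 < n
  · have h_rev : (i.rev : ℕ) = ℓ - 1 - i := by grind
    exact ⟨1, one_pos, by simp only [fcoroot, if_pos h_last, h_rev, one_smul]⟩
  by_cases h_odd : ℓ = 2 * n - 1
  · have h_rev : (i.rev : ℕ) = i := by grind
    exact ⟨2, two_pos, by simp only [fcoroot, if_neg h_last, if_pos h_odd, h_rev, two_smul]⟩
  · have h_rev : (i.rev : ℕ) = i + 1 := by grind
    refine ⟨2⁻¹, by positivity, ?_⟩
    simp only [fcoroot, if_neg h_last, if_neg h_odd, h_rev, inv_smul_smul₀ (two_ne_zero' ℝ)]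

theorem coroot_add_coroot_rev_mem_hull (hln : ℓ = 2 * n - 1 ∨ ℓ = 2 * n) (i : Fin ℓ) :
    coroot ℓ i + coroot ℓ i.rev ∈ PointedCone.hull ℝ (Set.range (fcoroot ℓ n)) := by
  wlog hi : i ≤ i.rev generalizing i
  · simpa only [Fin.rev_rev, add_comm] using
      this i.rev (by simpa only [Fin.rev_rev] using le_of_not_ge hi)
  obtain ⟨j, t, ht, h_eq⟩ := exists_coroot_add_coroot_rev_eq_smul_fcoroot hln hi
  rw [h_eq]
  exact PointedCone.smul_mem _ ht.le (PointedCone.subset_hull (Set.mem_range_self j))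

theorem add_Jmap_mem_hull (hln : ℓ = 2 * n - 1 ∨ ℓ = 2 * n) {x : Fin (ℓ + 1) → ℝ}
    (hx : x ∈ corootCone ℓ) :
    x + Jmap ℓ x ∈ PointedCone.hull ℝ (Set.range (fcoroot ℓ n)) := by
  obtain ⟨c, hc, rfl⟩ := hx
  have h_sum : ∑ i, c i • coroot ℓ i + Jmap ℓ (∑ i, c i • coroot ℓ i) =
      ∑ i, c i • (coroot ℓ i + coroot ℓ i.rev) := by
    simp only [Jmap_sum_smul, Jmap_coroot, smul_add, Finset.sum_add_distrib]
  rw [h_sum]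
  exact Submodule.sum_mem _ fun i _ =>
    PointedCone.smul_mem _ (hc i) (coroot_add_coroot_rev_mem_hull hln i)

theorem mem_fcone_of_Jmap_eq_self (hln : ℓ = 2 * n - 1 ∨ ℓ = 2 * n) {x : Fin (ℓ + 1) → ℝ}
    (hx : x ∈ corootCone ℓ) (hJ : Jmap ℓ x = x) : x ∈ fcone ℓ n := by
  have h_two : (2 : ℝ) • x ∈ PointedCone.hull ℝ (Set.range (fcoroot ℓ n)) := by
    simpa only [hJ, two_smul] using add_Jmap_mem_hull hln hx
  rw [fcone_eq_hull]
  exact (PointedCone.smul_mem_iff _ zero_lt_two).mp h_two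

end Folding

end MV

/-- for `μ• ∈ 𝒱^ω` and `w, w' ∈ W^ω`, the element `w⁻¹·(μ_{w'} - μ_w)`
lies in the folded coroot cone. -/
theorem stmt14 (ℓ n : ℕ) (hn : 2 ≤ n) (hln : ℓ = 2 * n - 1 ∨ ℓ = 2 * n)
    (μ : Equiv.Perm (Fin (ℓ+1)) → Fin (ℓ+1) → ℝ) (hμ : μ ∈ calV ℓ)
    (hfix : ∀ w, Jmap ℓ (μ (w0 ℓ * w * w0 ℓ)) = μ w)
    (w w' : Equiv.Perm (Fin (ℓ+1)))
    (hw : w0 ℓ * w * w0 ℓ = w) (hw' : w0 ℓ * w' * w0 ℓ = w') :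
    act ℓ w⁻¹ (μ w' - μ w) ∈ fcone ℓ n := by
  have hμw : Jmap ℓ (μ w) = μ w := by simpa only [hw] using hfix w
  have hμw' : Jmap ℓ (μ w') = μ w' := by simpa only [hw'] using hfix w'
  have hJ : Jmap ℓ (act ℓ w⁻¹ (μ w' - μ w)) = act ℓ w⁻¹ (μ w' - μ w) := by
    rw [Jmap_act, w0_mul_inv_mul_w0, hw, Jmap_sub, hμw, hμw']
  exact mem_fcone_of_Jmap_eq_self hln (hμ.2.1 w w') hJ
end

section
/- Assume ℓ = 2n with n ≥ 2, so N = 2n+1. Let M be a real-valued function on the nonempty proper subsets of {1,…,N} such that M_{ω(S)} = M_S for every such subset S, where ω(S) := {1,…,N} ∖ {N+1−k : k ∈ S}. Let w ∈ W satisfy w₀ w w₀ = w, and suppose the tropical Plücker relation at (w, n, n+1) holds: M_{w s_n(A_n)} + M_{w s_{n+1}(A_{n+1})} = min( M_{w(A_n)} + M_{w s_n s_{n+1}(A_{n+1})}, M_{w s_{n+1} s_n(A_n)} + M_{w(A_{n+1})} ), where A_i = {1,…,i} and u(S) denotes the image of S under the permutation u. Then 2 M_{w s_n(A_n)} = M_{w(A_n)}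 + M_{w s_{n+1} s_n(A_n)}. -/
open MV

namespace MV

section Diagram

variable {N k : ℕ} {α : Type*}

/-- The diagram automorphism `u ↦ w₀ u w₀` of the symmetric group, where `w₀ = w₀⁻¹` is
`Fin.revPerm`. -/
def diagramAut : MulAut (Equiv.Perm (Fin N)) := MulAut.conj Fin.revPerm

/-- The involution `ω` on chamber weights: `S` is sent to the complement of `w₀(S)`. -/
def diagramInvolution (S : Finset (Fin N)) : Finset (Fin N) := (S.image Fin.rev)ᶜ

/-- The chamber weight `u·Λ_k`, encoded as the subset `u(A_k)` of `Fin N`; the set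
`A_k = {1, …, k}` becomes `{0, …, k - 1}`. -/
def chamberSet (u : Equiv.Perm (Fin N)) (k : ℕ) : Finset (Fin N) :=
  (Finset.univ.filter (fun j : Fin N => (j : ℕ) < k)).image u

lemma diagramAut_inv_apply (u : Equiv.Perm (Fin N)) (x : Fin N) :
    (diagramAut u)⁻¹ x = (u⁻¹ x.rev).rev :=
  rfl

lemma diagramAut_swN {m a : ℕ} (ha : a < m) : diagramAut (swN m a) = swN m (m - 1 - a) := by
  rw [swN, swN, dif_pos (by omega), dif_pos (by omega), diagramAut, MulAut.conj_apply,
    ← Equiv.swap_apply_apply, Equiv.swap_comm]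
  congr 1 <;> ext <;> simp only [Fin.revPerm_apply, Fin.val_rev] <;> omega

lemma mem_diagramInvolution {S : Finset (Fin N)} {x : Fin N} :
    x ∈ diagramInvolution S ↔ x.rev ∉ S := by
  rw [diagramInvolution, Finset.mem_compl, ← Fin.rev_injective.mem_finset_image (a := x.rev),
    Fin.rev_rev]

lemma mem_chamberSet {u : Equiv.Perm (Fin N)} {x : Fin N} :
    x ∈ chamberSet u k ↔ (u⁻¹ x : ℕ) < k := by
  obtain ⟨y, rfl⟩ := u.surjective x
  simp [chamberSet]

lemma chamberSet_nonempty (u : Equiv.Perm (Fin N)) (hN : 0 < N) (hk : 0 < k) :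
    (chamberSet u k).Nonempty :=
  ⟨u ⟨0, hN⟩, mem_chamberSet.2 (by simpa using hk)⟩

lemma chamberSet_ne_univ (u : Equiv.Perm (Fin N)) (hk : k < N) :
    chamberSet u k ≠ Finset.univ := fun h => by
  have hmem : u ⟨k, hk⟩ ∈ chamberSet u k := h ▸ Finset.mem_univ _
  simp [mem_chamberSet] at hmem

lemma diagramInvolution_chamberSet (u : Equiv.Perm (Fin N)) :
    diagramInvolution (chamberSet u k) = chamberSet (diagramAut u) (N - k) := by
  ext x
  rw [mem_diagramInvolution, mem_chamberSet, mem_chamberSet, diagramAut_inv_apply, Fin.val_rev]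
  omega

lemma apply_chamberSet_diagramAut {M : Finset (Fin N) → α}
    (hM : ∀ S : Finset (Fin N), S.Nonempty → S ≠ Finset.univ → M (diagramInvolution S) = M S)
    (hk : 0 < k) (hkN : k < N) (u : Equiv.Perm (Fin N)) :
    M (chamberSet (diagramAut u) (N - k)) = M (chamberSet u k) := by
  rw [← diagramInvolution_chamberSet]
  exact hM _ (chamberSet_nonempty u (hk.trans hkN) hk) (chamberSet_ne_univ u hkN)

end Diagram

end MV

theorem stmt16_general {R : Type*} [AddCommMagma R] [LinearOrder R] {n : ℕ} (hn : 0 < n)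
    {M : Finset (Fin (2 * n + 1)) → R}
    (hM : ∀ S : Finset (Fin (2 * n + 1)), S.Nonempty → S ≠ Finset.univ →
      M (diagramInvolution S) = M S)
    {w : Equiv.Perm (Fin (2 * n + 1))} (hw : diagramAut w = w)
    (htp :
      M (chamberSet (w * swN (2 * n) (n - 1)) n) + M (chamberSet (w * swN (2 * n) n) (n + 1))
        = min
          (M (chamberSet w n)
            + M (chamberSet (w * swN (2 * n) (n - 1) * swN (2 * n) n) (n + 1)))
          (M (chamberSet (w * swN (2 * n) n * swN (2 * n) (n - 1)) n)
            + M (chamberSet w (n + 1)))) :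
    M (chamberSet (w * swN (2 * n) (n - 1)) n) + M (chamberSet (w * swN (2 * n) (n - 1)) n)
      = M (chamberSet w n) + M (chamberSet (w * swN (2 * n) n * swN (2 * n) (n - 1)) n) := by
  have level_succ (u : Equiv.Perm (Fin (2 * n + 1))) :
      M (chamberSet (diagramAut u) (n + 1)) = M (chamberSet u n) := by
    have hlevel : 2 * n + 1 - n = n + 1 := by omega
    rw [← hlevel]
    exact apply_chamberSet_diagramAut hM hn (by omega) u
  have aut_left : diagramAut (swN (2 * n) (n - 1)) = swN (2 * n) n := by
    rw [diagramAut_swN (by omega)]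
    congr 1
    omega
  have aut_right : diagramAut (swN (2 * n) n) = swN (2 * n) (n - 1) := by
    rw [diagramAut_swN (by omega)]
    congr 1
    omega
  have h_w := level_succ w
  have h_left := level_succ (w * swN (2 * n) (n - 1))
  have h_right := level_succ (w * swN (2 * n) n * swN (2 * n) (n - 1))
  simp only [map_mul, hw, aut_left, aut_right] at h_w h_left h_right
  rwa [h_w, h_left, h_right, add_comm (M (chamberSet (_ * _) n)) (M (chamberSet w n)),
    min_self] at htp

/-- for an `ω`-symmetric function `M` on chamber weights (encoded as
nonempty proper subsets of `{1,…,N}`, `N = 2n+1`) and `ω`-fixed `w`, the tropical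
Plücker relation at `(w, n, n+1)` forces `2 M_{w s_n(A_n)} = M_{w(A_n)} + M_{w s_{n+1} s_n(A_n)}`. -/
theorem stmt16 (n : ℕ) (hn : 2 ≤ n)
    (M : Finset (Fin (2 * n + 1)) → ℝ)
    (hsym : ∀ S : Finset (Fin (2 * n + 1)), S.Nonempty → S ≠ Finset.univ →
      M ((S.image Fin.rev)ᶜ) = M S)
    (w : Equiv.Perm (Fin (2 * n + 1)))
    (hw : Fin.revPerm * w * Fin.revPerm = w)
    (htp :
      M (((Finset.univ.filter (fun k : Fin (2 * n + 1) => (k : ℕ) < n)).image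
            ⇑(w * swN (2 * n) (n - 1))))
      + M (((Finset.univ.filter (fun k : Fin (2 * n + 1) => (k : ℕ) < n + 1)).image
            ⇑(w * swN (2 * n) n)))
      = min
          (M (((Finset.univ.filter (fun k : Fin (2 * n + 1) => (k : ℕ) < n)).image ⇑w))
           + M (((Finset.univ.filter (fun k : Fin (2 * n + 1) => (k : ℕ) < n + 1)).image
                ⇑(w * swN (2 * n) (n - 1) * swN (2 * n) n))))
          (M (((Finset.univ.filter (fun k : Fin (2 * n + 1) => (k : ℕ) < n)).image
                ⇑(w * swN (2 * n) n * swN (2 * n) (n - 1))))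
           + M (((Finset.univ.filter (fun k : Fin (2 * n + 1) => (k : ℕ) < n + 1)).image ⇑w)))) :
    2 * M (((Finset.univ.filter (fun k : Fin (2 * n + 1) => (k : ℕ) < n)).image
            ⇑(w * swN (2 * n) (n - 1))))
    = M (((Finset.univ.filter (fun k : Fin (2 * n + 1) => (k : ℕ) < n)).image ⇑w))
      + M (((Finset.univ.filter (fun k : Fin (2 * n + 1) => (k : ℕ) < n)).image
            ⇑(w * swN (2 * n) n * swN (2 * n) (n - 1)))) :=
  (two_mul _).trans (stmt16_general (by omega) hsym hw htp)
end
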